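/- For every odd integer n ≥ 3, there are infinitely many squarefree negative integers D such that D is the squarefree part of 1 − 2k^n for some odd integer k > 1 and n divides h(D), the class number of the imaginary quadratic field ℚ(√D). -/

import Mathlib

open IntermediateField NumberField

/-- The quadratic field `ℚ(√D)`, realized inside `ℂ` by adjoining the principal
square root of `D`. -/
noncomputable def quadField (D : ℤ) : IntermediateField ℚ ℂ :=
  ℚ⟮(D : ℂ) ^ ((1 : ℂ) / 2)⟯

/-- The class number of the quadratic field `ℚ(√D)`. -/
noncomputable def quadClassNumber (D : ℤ) : ℕ :=
  Nat.card (ClassGroup (𝓞 (quadField D)))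

/-!
Suppose `1 - 2 * k ^ n = D * s ^ 2` with `k` odd, and put `η = 1 + s√D` and
`α = η ^ 2 / 2 = 1 - k ^ n + s√D`. Since `α` has norm `k ^ (2 * n)` and is coprime to its conjugate,
the ideal `(α)` is an `n`-th power, say of `B`. If the class of `B` had order less than `n`, then
`α` would be a `p`-th power up to units for some prime `p = 2 * j + 1` dividing `n`. Units of
`ℤ[√D]` have order dividing `4`, so `α = β ^ p`, and `δ = η / β ^ j` satisfies `δ ^ 2 = 2 * β` and
`δ ^ p = 2 ^ j * η`. Comparing norms, `δ` has norm `2 * k ^ (n / p)` and hence odd real part, which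
divides `Re (δ ^ p) = 2 ^ j` and so is `±1`. Reducing `Re (δ ^ p)` modulo the norm of `δ` now gives
`k ^ (n / p) ∣ 1 ∓ 2 ^ j`, which is impossible for `k > 2 ^ n`.

Infinitely many `D` arise because `k` can be chosen so that some prime not dividing a prescribed odd
number divides `1 - 2 * k ^ n` exactly once, and therefore divides `D`.
-/

section RingOfIntegers

open QuadraticAlgebra

theorem isIntegral_trace_and_norm {R A : Type*} [CommRing R] [CommRing A] [Algebra R A] {a b : A}
    {z : QuadraticAlgebra A a b} (hz : IsIntegral R z) :
    IsIntegral R (trace z) ∧ IsIntegral R (norm z) := by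
  let conj : QuadraticAlgebra A a b →ₐ[R] QuadraticAlgebra A a b :=
    { starRingEnd _ with
      commutes' := fun r => by
        change star (algebraMap R (QuadraticAlgebra A a b) r) = _
        rw [IsScalarTower.algebraMap_apply R A (QuadraticAlgebra A a b)]
        ext <;> simp }
  have hstar : IsIntegral R (star z) := hz.map conj
  have hinj := algebraMap_injective (R := A) (a := a) (b := b)
  rw [← isIntegral_algebraMap_iff hinj, ← isIntegral_algebraMap_iff hinj,
    algebraMap_trace_eq_add_star, algebraMap_norm_eq_mul_star]
  exact ⟨hz.add hstar, hz.mul hstar⟩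

theorem isIntegral_of_isIntegral_mul_sq {R K : Type*} [CommRing R] [IsDomain R]
    [UniqueFactorizationMonoid R] [Field K] [Algebra R K] [IsFractionRing R K]
    {d : R} (hd : Squarefree d) {x : K} (hx : IsIntegral R (algebraMap R K d * x ^ 2)) :
    IsIntegral R x := by
  have hdx : IsIntegral R (algebraMap R K d * x) := by
    refine IsIntegral.of_pow two_pos ?_
    rw [show (algebraMap R K d * x) ^ 2 = algebraMap R K d * (algebraMap R K d * x ^ 2) by ring]
    exact isIntegral_algebraMap.mul hx
  obtain ⟨z, hz⟩ := IsIntegrallyClosed.isIntegral_iff.mp hx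
  obtain ⟨c, hc⟩ := IsIntegrallyClosed.isIntegral_iff.mp hdx
  have hcz : c ^ 2 = d * z := by
    apply IsFractionRing.injective R K
    rw [map_pow, map_mul, hc, hz]
    ring
  obtain ⟨e, rfl⟩ := (hd.dvd_pow_iff_dvd two_ne_zero).mp (Dvd.intro z hcz.symm)
  have hd0 : algebraMap R K d ≠ 0 := by simpa using hd.ne_zero
  have hex : algebraMap R K e = x := mul_left_cancel₀ hd0 (by rw [← hc, map_mul])
  exact hex ▸ isIntegral_algebraMap

theorem even_and_even_of_four_dvd_sq_sub_mul_sq {D x y : ℤ} (hD0 : ¬ 4 ∣ D) (hD1 : D % 4 ≠ 1)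
    (h : 4 ∣ x ^ 2 - D * y ^ 2) : Even x ∧ Even y := by
  rw [Int.even_iff, Int.even_iff]
  rw [Int.dvd_iff_emod_eq_zero] at hD0 h
  have hx : x % 4 = 0 ∨ x % 4 = 1 ∨ x % 4 = 2 ∨ x % 4 = 3 := by omega
  have hy : y % 4 = 0 ∨ y % 4 = 1 ∨ y % 4 = 2 ∨ y % 4 = 3 := by omega
  have hD : D % 4 = 2 ∨ D % 4 = 3 := by omega
  rcases hx with hx | hx | hx | hx <;> rcases hy with hy | hy | hy | hy <;>
    rcases hD with hD | hD <;> simp [hx, hy, hD, Int.sub_emod, Int.mul_emod, pow_two] at h <;> omega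

theorem not_isSquare_of_squarefree {D : ℤ} (hD : Squarefree D) (hD1 : D ≠ 1) : ¬ IsSquare D := by
  rintro ⟨c, rfl⟩
  exact hD1 (Int.isUnit_mul_self (hD c dvd_rfl))

/-- The isomorphism `F[X] / (X² - d) ≃ F(√d)` for a nonsquare `d`, given by a square root `w` of `d`
in an extension field. The `Fact` is the form in which Mathlib makes `QuadraticAlgebra F d 0`
a field. -/
noncomputable def quadraticAlgebraEquivAdjoin {F L : Type*} [Field F] [Field L] [Algebra F L]
    {d : F} [Fact (∀ r : F, r ^ 2 ≠ d + 0 * r)] {w : L} (hw : w ^ 2 = algebraMap F L d) :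
    QuadraticAlgebra F d 0 ≃ₐ[F] F⟮w⟯ :=
  let f : QuadraticAlgebra F d 0 →ₐ[F] L :=
    QuadraticAlgebra.lift ⟨w, by simp [← sq, hw, Algebra.smul_def]⟩
  have hf : f.fieldRange = F⟮w⟯ := by
    refine le_antisymm ?_ (adjoin_simple_le_iff.mpr ⟨ω, by simp [f]⟩)
    rintro _ ⟨z, rfl⟩
    exact add_mem (F⟮w⟯.smul_mem (one_mem _)) (F⟮w⟯.smul_mem (mem_adjoin_simple_self F w))
  (AlgEquiv.ofInjectiveField f).trans (equivOfEq hf)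

variable {D : ℤ}

/-- The inclusion of `ℤ[√D]` into `ℚ(√D)`, the latter in the model `QuadraticAlgebra ℚ D 0`. -/
noncomputable instance algebraZsqrtdQuadraticAlgebra : Algebra (ℤ√D) (QuadraticAlgebra ℚ D 0) :=
  (Zsqrtd.lift ⟨ω, by ext <;> simp⟩).toAlgebra

theorem algebraMap_zsqrtd_eq_mk (z : ℤ√D) :
    algebraMap (ℤ√D) (QuadraticAlgebra ℚ D 0) z = ⟨z.re, z.im⟩ := by
  ext <;> simp [RingHom.algebraMap_toAlgebra]

theorem isIntegral_algebraMap_zsqrtd (z : ℤ√D) :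
    IsIntegral ℤ (algebraMap (ℤ√D) (QuadraticAlgebra ℚ D 0) z) := by
  have hω_sq : (ω : QuadraticAlgebra ℚ D 0) ^ 2 = algebraMap ℤ _ D := by
    ext <;> simp [sq]
  have hω : IsIntegral ℤ (ω : QuadraticAlgebra ℚ D 0) :=
    .of_pow two_pos (hω_sq ▸ isIntegral_algebraMap)
  have hz : algebraMap (ℤ√D) (QuadraticAlgebra ℚ D 0) z =
      algebraMap ℤ _ z.re + algebraMap ℤ _ z.im * ω := by
    rw [algebraMap_zsqrtd_eq_mk]
    ext <;> simp
  rw [hz]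
  exact isIntegral_algebraMap.add (isIntegral_algebraMap.mul hω)

theorem exists_int_eq_two_mul_of_isIntegral (hD : Squarefree D) {z : QuadraticAlgebra ℚ D 0}
    (hz : IsIntegral ℤ z) :
    ∃ x y : ℤ, x = 2 * z.re ∧ y = 2 * z.im ∧ 4 ∣ x ^ 2 - D * y ^ 2 := by
  obtain ⟨htrace, hnorm⟩ := isIntegral_trace_and_norm hz
  have him : IsIntegral ℤ (2 * z.im) := by
    apply isIntegral_of_isIntegral_mul_sq hD
    have h4 : IsIntegral ℤ (4 : ℚ) := isIntegral_algebraMap (x := (4 : ℤ))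
    convert! (htrace.pow 2).sub (h4.mul hnorm) using 1
    simp only [eq_intCast, trace_def, norm_def]
    ring
  obtain ⟨x, hx⟩ := IsIntegrallyClosed.isIntegral_iff.mp htrace
  obtain ⟨y, hy⟩ := IsIntegrallyClosed.isIntegral_iff.mp him
  obtain ⟨N, hN⟩ := IsIntegrallyClosed.isIntegral_iff.mp hnorm
  simp only [eq_intCast, trace_def, norm_def, zero_mul, add_zero] at hx hy hN
  refine ⟨x, y, hx, hy, N, ?_⟩
  have hxyN : (x : ℚ) ^ 2 - D * y ^ 2 = 4 * N := by
    rw [hx, hy, hN]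
    ring
  exact_mod_cast hxyN

theorem isIntegral_quadraticAlgebra_iff (hD : Squarefree D) (hD4 : D % 4 ≠ 1)
    {z : QuadraticAlgebra ℚ D 0} : IsIntegral ℤ z ↔ ∃ y : ℤ√D, algebraMap _ _ y = z := by
  refine ⟨fun hz => ?_, fun ⟨y, hy⟩ => hy ▸ isIntegral_algebraMap_zsqrtd y⟩
  have h4D : ¬ 4 ∣ D := fun h => absurd (hD 2 h) (by decide)
  obtain ⟨x, y, hx, hy, h4⟩ := exists_int_eq_two_mul_of_isIntegral hD hz
  obtain ⟨⟨a, rfl⟩, b, rfl⟩ := even_and_even_of_four_dvd_sq_sub_mul_sq h4D hD4 h4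
  refine ⟨⟨a, b⟩, ?_⟩
  rw [algebraMap_zsqrtd_eq_mk]
  push_cast at hx hy
  ext <;> simp only <;> linarith

theorem isIntegralClosure_zsqrtd (hD : Squarefree D) (hD4 : D % 4 ≠ 1) :
    IsIntegralClosure (ℤ√D) ℤ (QuadraticAlgebra ℚ D 0) where
  algebraMap_injective x y hxy := by
    rw [algebraMap_zsqrtd_eq_mk, algebraMap_zsqrtd_eq_mk] at hxy
    simpa [QuadraticAlgebra.ext_iff, Zsqrtd.ext_iff] using hxy
  isIntegral_iff := isIntegral_quadraticAlgebra_iff hD hD4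

theorem fact_sq_ne_of_not_isSquare (hD : ¬ IsSquare D) :
    Fact (∀ r : ℚ, r ^ 2 ≠ (D : ℚ) + 0 * r) where
  out r hr := hD (Rat.isSquare_intCast_iff.mp ⟨r, by rw [← sq, hr]; ring⟩)

theorem isDedekindDomain_zsqrtd (hD : Squarefree D) (hD4 : D % 4 ≠ 1) :
    IsDedekindDomain (ℤ√D) := by
  have := isIntegralClosure_zsqrtd hD hD4
  have := fact_sq_ne_of_not_isSquare (not_isSquare_of_squarefree hD (by rintro rfl; simp at hD4))
  have : IsDomain (ℤ√D) :=
    (IsIntegralClosure.algebraMap_injective (ℤ√D) ℤ (QuadraticAlgebra ℚ D 0)).isDomain _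
  exact IsIntegralClosure.isDedekindDomain ℤ ℚ (QuadraticAlgebra ℚ D 0) (ℤ√D)

theorem quadClassNumber_eq_card_classGroup_zsqrtd [IsDomain (ℤ√D)] (hD : Squarefree D)
    (hD4 : D % 4 ≠ 1) : quadClassNumber D = Nat.card (ClassGroup (ℤ√D)) := by
  have := isIntegralClosure_zsqrtd hD hD4
  have := fact_sq_ne_of_not_isSquare (not_isSquare_of_squarefree hD (by rintro rfl; simp at hD4))
  have hsqrt : ((D : ℂ) ^ ((1 : ℂ) / 2)) ^ 2 = algebraMap ℚ ℂ D := by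
    rw [one_div]
    simp
  let fieldEquiv : QuadraticAlgebra ℚ D 0 ≃ₐ[ℚ] quadField D := quadraticAlgebraEquivAdjoin hsqrt
  let ringEquiv : 𝓞 (quadField D) ≃+* ℤ√D :=
    (RingOfIntegers.mapRingEquiv fieldEquiv.symm.toRingEquiv).trans (RingOfIntegers.equiv (ℤ√D))
  exact Nat.card_congr (ClassGroup.mulEquiv ringEquiv).toEquiv

end RingOfIntegers

section PowersInDomains

variable {R : Type*} [CommRing R]

theorem dvd_card_classGroup_of_mul_eq_pow [IsDedekindDomain R] {a b c : R} {n : ℕ} (hn : n ≠ 0)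
    (ha : a ≠ 0) (hab : IsCoprime a b) (h : a * b = c ^ n)
    (hpow : ∀ p, p.Prime → p ∣ n → ∀ x, ¬ Associated a (x ^ p)) :
    n ∣ Nat.card (ClassGroup R) := by
  have hspan : Ideal.span {a} * Ideal.span {b} = Ideal.span {c} ^ n := by
    rw [Ideal.span_singleton_mul_span_singleton, h, Ideal.span_singleton_pow]
  classical
  obtain ⟨B, hB⟩ := exists_eq_pow_of_mul_eq_pow_of_coprime
    ((Ideal.isCoprime_span_singleton_iff a b).mpr hab) hspan
  have hB0 : B ≠ 0 := by
    rintro rfl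
    rw [zero_pow hn] at hB
    exact ha (Ideal.span_singleton_eq_bot.mp hB)
  have hmk (i : ℕ) : ClassGroup.mk0 ⟨B, mem_nonZeroDivisors_of_ne_zero hB0⟩ ^ i = 1 ↔
      (B ^ i).IsPrincipal := by
    rw [← map_pow, SubmonoidClass.mk_pow, ClassGroup.mk0_eq_one_iff]
  have hord : orderOf (ClassGroup.mk0 ⟨B, mem_nonZeroDivisors_of_ne_zero hB0⟩) = n := by
    refine orderOf_eq_of_pow_and_pow_div_prime (Nat.pos_of_ne_zero hn) ?_ fun p hp hpn hone => ?_
    · exact (hmk n).mpr (hB ▸ ⟨a, rfl⟩)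
    · obtain ⟨x, hx⟩ := (hmk _).mp hone
      refine hpow p hp hpn x (Ideal.span_singleton_eq_span_singleton.mp ?_)
      rw [Ideal.submodule_span_eq] at hx
      rw [hB, ← Ideal.span_singleton_pow, ← hx, ← pow_mul, Nat.div_mul_cancel hpn]
  exact hord ▸ orderOf_dvd_natCard _

theorem exists_sq_eq_mul_of_sq_eq_mul_pow [IsDomain R] [IsIntegrallyClosed R] {x b c : R} {j : ℕ}
    (hb : b ≠ 0) (h : x ^ 2 = c * b ^ (2 * j + 1)) :
    ∃ y, y ^ 2 = c * b ∧ y ^ (2 * j + 1) = c ^ j * x := by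
  have hdvd : b ^ j ∣ x := by
    rw [← IsIntegrallyClosed.pow_dvd_pow_iff two_ne_zero, h]
    exact ⟨c * b, by ring⟩
  obtain ⟨y, rfl⟩ := hdvd
  have hy : y ^ 2 = c * b := by
    apply mul_left_cancel₀ (pow_ne_zero 2 (pow_ne_zero j hb))
    rw [← mul_pow, h]
    ring
  refine ⟨y, hy, ?_⟩
  rw [pow_succ, pow_mul, hy]
  ring

end PowersInDomains

section QuadraticIntegers

variable {d : ℤ}

theorem add_star_eq_intCast (z : ℤ√d) : z + star z = ((2 * z.re : ℤ) : ℤ√d) := by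
  ext <;> simp [two_mul]

theorem isCoprime_star_of_isCoprime_trace_norm {z : ℤ√d} (h : IsCoprime (2 * z.re) z.norm) :
    IsCoprime z (star z) := by
  have hcast : IsCoprime (z + star z) (z * star z) := by
    rw [add_star_eq_intCast, ← Zsqrtd.norm_eq_mul_conj]
    exact h.intCast
  refine IsCoprime.of_add_mul_left_left (z := 1) ?_
  rw [mul_one]
  exact hcast.of_mul_right_right

theorem re_dvd_re_pow_of_odd (z : ℤ√d) {n : ℕ} (hn : Odd n) : z.re ∣ (z ^ n).re := by
  have h := hn.add_dvd_pow_add_pow z (star z)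
  rw [← star_pow, add_star_eq_intCast, add_star_eq_intCast, Zsqrtd.intCast_dvd_intCast] at h
  exact (mul_dvd_mul_iff_left two_ne_zero).mp h

-- Since `z * (z - 2 * z.re) = -z.norm`, the element `z ^ 2` is `2 * z.re * z` modulo `z.norm`.
theorem norm_dvd_re_pow_succ_sub (z : ℤ√d) (i : ℕ) :
    z.norm ∣ (z ^ (i + 1)).re - (2 * z.re) ^ i * z.re := by
  have htrace : z - ((2 * z.re : ℤ) : ℤ√d) = - star z := by
    rw [← add_star_eq_intCast, sub_add_cancel_left]
  have h : (z.norm : ℤ√d) ∣ z ^ (i + 1) - (((2 * z.re) ^ i : ℤ) : ℤ√d) * z := by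
    have hstar := sub_dvd_pow_sub_pow z ((2 * z.re : ℤ) : ℤ√d) i
    rw [htrace, neg_dvd] at hstar
    rw [Zsqrtd.norm_eq_mul_conj, Int.cast_pow, pow_succ', mul_comm _ z, ← mul_sub]
    exact mul_dvd_mul_left z hstar
  have hre := ((Zsqrtd.intCast_dvd _ _).mp h).1
  rwa [Zsqrtd.re_sub, Zsqrtd.re_smul] at hre

theorem odd_re_of_norm_eq_two_mul {z : ℤ√d} (hd : Odd d) {m : ℤ} (hm : Odd m)
    (h : z.norm = 2 * m) : Odd z.re := by
  by_contra hre
  rw [Int.not_odd_iff_even] at hre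
  have him : Even z.im := by
    have : Even (d * z.im * z.im) := by
      have := (hre.mul_right z.re).sub (even_two_mul m)
      rwa [← h, Zsqrtd.norm_def, sub_sub_cancel] at this
    simpa [Int.even_mul, Int.not_even_iff_odd.mpr hd] using this
  obtain ⟨x, hx⟩ := hre
  obtain ⟨y, hy⟩ := him
  obtain ⟨l, rfl⟩ := hm
  rw [Zsqrtd.norm_def, hx, hy] at h
  ring_nf at h
  omega

theorem pow_four_eq_one_of_isUnit (hd : d < 0) {u : ℤ√d} (hu : IsUnit u) : u ^ 4 = 1 := by
  rw [← Zsqrtd.norm_eq_one_iff' hd.le, Zsqrtd.norm_def] at hu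
  have hcases : u.im = 0 ∨ u.re = 0 := by
    by_contra! h
    have him := mul_self_pos.mpr h.1
    have hre := mul_self_pos.mpr h.2
    nlinarith
  have hsq : u ^ 2 = 1 ∨ u ^ 2 = -1 := by
    refine hcases.imp (fun h => ?_) fun h => ?_
    · have hre : u.re * u.re = 1 := by simpa [h] using hu
      ext <;> simp [sq, h, hre]
    · have him : d * u.im * u.im = -1 := by simpa [h, neg_eq_iff_eq_neg] using hu
      ext <;> simp [sq, h, him]
  rcases hsq with h | h <;> rw [show u ^ 4 = (u ^ 2) ^ 2 by ring, h] <;> ring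

theorem exists_eq_pow_of_associated_pow (hd : d < 0) {a b : ℤ√d} {n : ℕ} (hn : Odd n)
    (h : Associated a (b ^ n)) : ∃ c, a = c ^ n := by
  obtain ⟨u, hu⟩ := h.symm
  refine ⟨b * u ^ n, ?_⟩
  have hun : (u : ℤ√d) ^ (n * n) = u := by
    obtain ⟨i, rfl⟩ := hn
    rw [show (2 * i + 1) * (2 * i + 1) = 4 * (i * i + i) + 1 by ring, pow_succ, pow_mul,
      pow_four_eq_one_of_isUnit hd u.isUnit, one_pow, one_mul]
  rw [mul_pow, ← pow_mul, hun, hu]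

end QuadraticIntegers

section Generator

variable {d m s : ℤ} {j : ℕ}

theorem norm_mk_one_sub (h : 1 - 2 * m = d * s ^ 2) : (⟨1 - m, s⟩ : ℤ√d).norm = m ^ 2 := by
  rw [Zsqrtd.norm_def]
  linear_combination h

theorem isCoprime_star_mk_one_sub (hm : Odd m) (h : 1 - 2 * m = d * s ^ 2) :
    IsCoprime (⟨1 - m, s⟩ : ℤ√d) (star ⟨1 - m, s⟩) := by
  apply isCoprime_star_of_isCoprime_trace_norm
  rw [norm_mk_one_sub h]
  have htwo : IsCoprime 2 m := Int.isCoprime_two_left.mpr hm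
  have hsub : IsCoprime (1 - m) m := ⟨1, 1, by ring⟩
  exact (htwo.mul_left hsub).pow_right

theorem sq_mk_one (h : 1 - 2 * m = d * s ^ 2) : (⟨1, s⟩ : ℤ√d) ^ 2 = 2 * ⟨1 - m, s⟩ := by
  have hre : 1 + d * s * s = 2 * (1 - m) := by linear_combination - h
  ext <;> simp [sq, hre, two_mul]

theorem norm_eq_two_mul_of_pow_eq_two_pow_mul_mk_one (h : 1 - 2 * m ^ (2 * j + 1) = d * s ^ 2)
    {z : ℤ√d} (hz : z ^ (2 * j + 1) = 2 ^ j * ⟨1, s⟩) : z.norm = 2 * m := by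
  apply (Odd.strictMono_pow ⟨j, rfl⟩ : StrictMono fun x : ℤ => x ^ (2 * j + 1)).injective
  have hnorm := congrArg Zsqrtd.normMonoidHom hz
  rw [map_mul, map_pow, map_pow] at hnorm
  have htwo : (2 : ℤ√d).norm = 2 * 2 := Zsqrtd.norm_intCast 2
  calc z.norm ^ (2 * j + 1) = (2 : ℤ√d).norm ^ j * (1 * 1 - d * s * s) := hnorm
    _ = 2 ^ j * 2 ^ j * (2 * m ^ (2 * j + 1)) := by
      rw [htwo, mul_pow]
      linear_combination 2 ^ j * 2 ^ j * h
    _ = (2 * m) ^ (2 * j + 1) := by ring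

theorem abs_le_of_pow_eq_two_pow_mul_mk_one (hd : Odd d) (hm : Odd m) (hj : j ≠ 0)
    (h : 1 - 2 * m ^ (2 * j + 1) = d * s ^ 2) {z : ℤ√d}
    (hz : z ^ (2 * j + 1) = 2 ^ j * ⟨1, s⟩) : |m| ≤ 2 ^ j + 1 := by
  have hnorm := norm_eq_two_mul_of_pow_eq_two_pow_mul_mk_one h hz
  have hre : (z ^ (2 * j + 1)).re = 2 ^ j := by
    have htwo : (2 : ℤ√d) ^ j = ((2 ^ j : ℤ) : ℤ√d) := by norm_cast
    rw [hz, htwo, Zsqrtd.re_smul, mul_one]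
  have hcop {x : ℤ} (hx : Odd x) : IsCoprime x (2 ^ j) :=
    (Int.isCoprime_two_right.mpr hx).pow_right
  have hunit : IsUnit z.re := (hcop (odd_re_of_norm_eq_two_mul hd hm hnorm)).isUnit_of_dvd
    (hre ▸ re_dvd_re_pow_of_odd z ⟨j, rfl⟩)
  have hdvd : m ∣ 2 ^ j * (1 - 2 ^ j * z.re) := by
    have hmod := norm_dvd_re_pow_succ_sub z (2 * j)
    rw [hnorm, hre, pow_mul, mul_pow, Int.isUnit_sq hunit, mul_one, pow_right_comm, sq] at hmod
    convert! (Dvd.intro_left 2 rfl).trans hmod using 1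
    ring
  have hdvd' : m ∣ 1 - 2 ^ j * z.re := (hcop hm).dvd_of_dvd_mul_left hdvd
  have hne : 1 - 2 ^ j * z.re ≠ 0 := fun h0 => by
    have hodd : Odd (2 ^ j * z.re) := by rw [← sub_eq_zero.mp h0]; exact odd_one
    exact absurd hodd (Int.not_odd_iff_even.mpr ((even_two.pow_of_ne_zero hj).mul_right _))
  calc |m| ≤ |1 - 2 ^ j * z.re| := Int.le_of_dvd (abs_pos.mpr hne) ((abs_dvd_abs _ _).mpr hdvd')
    _ ≤ |1| + |2 ^ j * z.re| := abs_sub _ _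
    _ = 2 ^ j + 1 := by
      rw [abs_mul, Int.isUnit_iff_abs_eq.mp hunit, abs_pow]
      norm_num [add_comm]

theorem not_associated_mk_one_sub_pow [IsDomain (ℤ√d)] [IsIntegrallyClosed (ℤ√d)]
    (hd0 : d < 0) (hd : Odd d) (hm : Odd m) (hj : j ≠ 0) (hjm : 2 ^ j + 1 < |m|)
    (h : 1 - 2 * m ^ (2 * j + 1) = d * s ^ 2) (x : ℤ√d) :
    ¬ Associated ⟨1 - m ^ (2 * j + 1), s⟩ (x ^ (2 * j + 1)) := by
  intro hassoc
  obtain ⟨y, hy⟩ := exists_eq_pow_of_associated_pow hd0 ⟨j, rfl⟩ hassoc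
  have hsq : (⟨1, s⟩ : ℤ√d) ^ 2 = 2 * y ^ (2 * j + 1) := by rw [sq_mk_one h, hy]
  have hy0 : y ≠ 0 := by
    rintro rfl
    rw [zero_pow (by omega), mul_zero, sq_eq_zero_iff] at hsq
    exact one_ne_zero (congrArg Zsqrtd.re hsq)
  obtain ⟨z, -, hz⟩ := exists_sq_eq_mul_of_sq_eq_mul_pow hy0 hsq
  exact hjm.not_ge (abs_le_of_pow_eq_two_pow_mul_mk_one hd hm hj h hz)

theorem emod_four_eq_three_of_one_sub_two_mul_eq (hm : Odd m)
    (h : 1 - 2 * m = d * s ^ 2) : d % 4 = 3 := by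
  obtain ⟨a, rfl⟩ := hm
  rcases Int.even_or_odd' s with ⟨b, rfl | rfl⟩
  · rw [show d * (2 * b) ^ 2 = 4 * (d * b ^ 2) by ring] at h
    omega
  · rw [show d * (2 * b + 1) ^ 2 = 4 * (d * (b ^ 2 + b)) + d by ring] at h
    omega

theorem neg_of_one_sub_two_mul_eq (hm : 0 < m) (h : 1 - 2 * m = d * s ^ 2) : d < 0 :=
  neg_of_mul_neg_left (by omega : d * s ^ 2 < 0) (sq_nonneg s)

theorem dvd_quadClassNumber {D k : ℤ} {n : ℕ} (hn : Odd n) (hk : Odd k) (hkn : 2 ^ n < k)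
    (hD : Squarefree D) (h : 1 - 2 * k ^ n = D * s ^ 2) : n ∣ quadClassNumber D := by
  have hD4 : D % 4 = 3 := emod_four_eq_three_of_one_sub_two_mul_eq hk.pow h
  have hk1 : 1 < k := (one_le_pow₀ one_le_two).trans_lt hkn
  have hpow : 1 < k ^ n := one_lt_pow₀ hk1 hn.pos.ne'
  have hD0 : D < 0 := neg_of_one_sub_two_mul_eq (by omega) h
  have := isDedekindDomain_zsqrtd hD (by omega)
  have hnorm := norm_mk_one_sub h
  have hne : (⟨1 - k ^ n, s⟩ : ℤ√D) ≠ 0 := fun h0 => by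
    rw [h0, Zsqrtd.norm_zero] at hnorm
    nlinarith
  rw [quadClassNumber_eq_card_classGroup_zsqrtd hD (by omega)]
  refine dvd_card_classGroup_of_mul_eq_pow (c := ((k ^ 2 : ℤ) : ℤ√D)) hn.pos.ne' hne
    (isCoprime_star_mk_one_sub hk.pow h) ?_ fun p hp hpn => ?_
  · rw [← Zsqrtd.norm_eq_mul_conj, hnorm, pow_right_comm, Int.cast_pow]
  obtain ⟨j, rfl⟩ := hn.of_dvd_nat hpn
  obtain ⟨r, rfl⟩ := hpn
  have hr : r ≠ 0 := by
    rintro rfl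
    simp at hn
  have hj : j ≠ 0 := by
    rintro rfl
    exact Nat.not_prime_one hp
  rw [pow_mul'] at h ⊢
  refine not_associated_mk_one_sub_pow hD0 (Int.odd_iff.mpr (by omega)) hk.pow hj ?_ h
  have hjn : j + 1 ≤ (2 * j + 1) * r :=
    (by omega : j + 1 ≤ 2 * j + 1).trans (Nat.le_mul_of_pos_right _ (Nat.pos_of_ne_zero hr))
  calc (2 : ℤ) ^ j + 1 ≤ 2 ^ j + 2 ^ j := by gcongr; exact one_le_pow₀ one_le_two
    _ = 2 ^ (j + 1) := by ring
    _ ≤ 2 ^ ((2 * j + 1) * r) := pow_le_pow_right₀ one_le_two hjn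
    _ < k := hkn
    _ ≤ k ^ r := le_self_pow₀ hk1.le hr
    _ ≤ |k ^ r| := le_abs_self _

end Generator

section InfinitelyMany

theorem infinite_of_forall_odd_exists_not_dvd {S : Set ℤ} (hodd : ∀ D ∈ S, Odd D)
    (h : ∀ m : ℤ, Odd m → ∃ D ∈ S, ¬ D ∣ m) : S.Infinite := by
  intro hfin
  obtain ⟨D, hD, hndvd⟩ := h (∏ D ∈ hfin.toFinset, D)
    (Finset.prod_induction _ _ (fun _ _ => Odd.mul) odd_one (by simpa using hodd))
  exact hndvd (Finset.dvd_prod_of_mem _ (hfin.mem_toFinset.mpr hD))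

theorem exists_squarefree_mul_sq {N : ℤ} (hN : N ≠ 0) :
    ∃ D s : ℤ, Squarefree D ∧ 0 < s ∧ N = D * s ^ 2 := by
  obtain ⟨a, b, -, hb, hab, ha⟩ := Nat.sq_mul_squarefree_of_pos (Int.natAbs_pos.mpr hN)
  refine ⟨N.sign * a, b, ?_, by exact_mod_cast hb, ?_⟩
  · rwa [← Int.squarefree_natAbs, Int.natAbs_mul, Int.natAbs_sign_of_ne_zero hN, one_mul]
  · rw [mul_assoc, mul_comm (a : ℤ), ← Nat.cast_pow, ← Nat.cast_mul, hab, Int.sign_mul_natAbs]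

theorem dvd_of_dvd_mul_sq {M : Type*} [CommMonoidWithZero M] {p a b : M} (hp : Prime p)
    (h : p ∣ a * b ^ 2) (hsq : ¬ p ^ 2 ∣ a * b ^ 2) : p ∣ a :=
  (hp.dvd_or_dvd h).resolve_right fun hb =>
    hsq ((pow_dvd_pow_of_dvd (hp.dvd_of_dvd_pow hb) 2).mul_left a)

open Polynomial

theorem not_sq_dvd_eval_add_mul {R : Type*} [CommRing R] [IsDomain R] {p : R} (hp : Prime p)
    {f : R[X]} {x t : R} (hx : p ^ 2 ∣ f.eval x) (hfx : ¬ p ∣ f.derivative.eval x) (ht : ¬ p ∣ t) :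
    ¬ p ^ 2 ∣ f.eval (x + p * t) := by
  obtain ⟨c, hc⟩ := f.binomExpansion x (p * t)
  intro h
  have hlin : p * p ∣ p * (f.derivative.eval x * t) := by
    convert! dvd_sub (dvd_sub h hx) (Dvd.intro (c * t ^ 2) rfl) using 1
    · ring
    · rw [hc]; ring
  exact (hp.dvd_or_dvd ((mul_dvd_mul_iff_left hp.ne_zero).mp hlin)).elim hfx ht

theorem exists_dvd_and_not_sq_dvd_eval {R : Type*} [CommRing R] [IsDomain R] {p : R}
    (hp : Prime p) {f : R[X]} {x t : R} (hx : p ∣ f.eval x) (hfx : ¬ p ∣ f.derivative.eval x)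
    (ht : ¬ p ∣ t) :
    ∃ y, (y = x ∨ y = x + p * t) ∧ p ∣ f.eval y ∧ ¬ p ^ 2 ∣ f.eval y := by
  by_cases hsq : p ^ 2 ∣ f.eval x
  · refine ⟨x + p * t, .inr rfl, ?_, not_sq_dvd_eval_add_mul hp hsq hfx ht⟩
    have hsub := sub_dvd_eval_sub (x + p * t) x f
    rw [add_sub_cancel_left] at hsub
    exact (dvd_iff_dvd_of_dvd_sub (dvd_of_mul_right_dvd hsub)).mpr hx
  · exact ⟨x, .inl rfl, hx, hsq⟩

theorem exists_prime_dvd_one_sub_two_mul_pow {n : ℕ} {m : ℤ} (hm1 : 1 < m) (hm : Odd m)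
    (hnm : (n : ℤ) ∣ m) :
    ∃ k q : ℤ, Odd k ∧ m ≤ k ∧ Prime q ∧ ¬ q ∣ m ∧ q ∣ 1 - 2 * k ^ n ∧ ¬ q ^ 2 ∣ 1 - 2 * k ^ n := by
  have hn : n ≠ 0 := by
    rintro rfl
    exact absurd (zero_dvd_iff.mp hnm) (by omega)
  have hpow : 1 < m ^ n := one_lt_pow₀ hm1 hn
  obtain ⟨q, hq, hqm⟩ := Nat.exists_prime_and_dvd (n := (1 - 2 * m ^ n).natAbs) (by omega)
  rw [← Int.natCast_dvd] at hqm
  have hqp : Prime (q : ℤ) := Nat.prime_iff_prime_int.mp hq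
  have hcop : ¬ (q : ℤ) ∣ 2 * m ^ n := fun h =>
    hqp.not_dvd_one (by simpa using dvd_add hqm h)
  have hq2 : ¬ (q : ℤ) ∣ 2 := fun h => hcop (h.mul_right _)
  have hqm' : ¬ (q : ℤ) ∣ m := fun h => hcop ((dvd_pow h hn).mul_left 2)
  let f : ℤ[X] := 1 - C 2 * X ^ n
  have hf (x : ℤ) : f.eval x = 1 - 2 * x ^ n := by simp [f]
  have hf' : ¬ (q : ℤ) ∣ f.derivative.eval m := by
    have : f.derivative.eval m = - (2 * (n * m ^ (n - 1))) := by simp [f, derivative_X_pow]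
    rw [this, dvd_neg, hqp.dvd_mul, hqp.dvd_mul]
    rintro (h | h | h)
    · exact hq2 h
    · exact hqm' (h.trans hnm)
    · exact hqm' (hqp.dvd_of_dvd_pow h)
  obtain ⟨k, hkm, hqk⟩ := exists_dvd_and_not_sq_dvd_eval hqp ((hf m).symm ▸ hqm) hf' hq2
  rw [hf] at hqk
  rcases hkm with rfl | rfl
  · exact ⟨k, q, hm, le_rfl, hqp, hqm', hqk⟩
  · exact ⟨m + q * 2, q, hm.add_even (even_two.mul_left _), by omega, hqp, hqm', hqk⟩

theorem exists_squarefree_part_not_dvd {n : ℕ} (hn : Odd n) {m : ℤ} (hm : Odd m) (B : ℤ) :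
    ∃ D k s : ℤ, Squarefree D ∧ Odd k ∧ B < k ∧ 0 < s ∧ 1 - 2 * k ^ n = D * s ^ 2 ∧ ¬ D ∣ m := by
  have hnm : 0 < n * m ^ 2 :=
    mul_pos (by exact_mod_cast hn.pos) (pow_two_pos_of_ne_zero (by rintro rfl; simp at hm))
  have hodd : Odd (n * m ^ 2 * (2 * B ^ 2 + 3)) :=
    (((Int.odd_coe_nat n).mpr hn).mul hm.pow).mul ((even_two_mul _).add_odd (by decide))
  have hle : 2 * B ^ 2 + 3 ≤ n * m ^ 2 * (2 * B ^ 2 + 3) :=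
    le_mul_of_one_le_left (by positivity) hnm
  have hB : B < 2 * B ^ 2 + 3 := by nlinarith
  obtain ⟨k, q, hk, hNk, hq, hqN, hqk, hqk_sq⟩ := exists_prime_dvd_one_sub_two_mul_pow
    (by nlinarith) hodd (Dvd.intro _ (mul_assoc _ _ _).symm)
  obtain ⟨D, s, hD, hs, h⟩ := exists_squarefree_mul_sq (N := 1 - 2 * k ^ n) (by omega)
  rw [h] at hqk hqk_sq
  refine ⟨D, k, s, hD, hk, hB.trans_le (hle.trans hNk), hs, h, fun hDm => hqN ?_⟩
  calc q ∣ D := dvd_of_dvd_mul_sq hq hqk hqk_sq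
    _ ∣ m := hDm
    _ ∣ n * m ^ 2 * (2 * B ^ 2 + 3) := ((dvd_pow_self m two_ne_zero).mul_left _).mul_right _

end InfinitelyMany

theorem stmt_13 (n : ℕ) (hn : 3 ≤ n) (hno : Odd n) :
    {D : ℤ | D < 0 ∧ Squarefree D ∧
      (∃ k s : ℤ, Odd k ∧ 1 < k ∧ 0 < s ∧ 1 - 2 * k ^ n = D * s ^ 2) ∧
      n ∣ quadClassNumber D}.Infinite := by
  refine infinite_of_forall_odd_exists_not_dvd ?_ fun m hm => ?_
  · rintro D ⟨-, -, ⟨k, s, hk, -, -, h⟩, -⟩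
    have hD4 := emod_four_eq_three_of_one_sub_two_mul_eq hk.pow h
    exact Int.odd_iff.mpr (by omega)
  · obtain ⟨D, k, s, hD, hk, hkn, hs, h, hDm⟩ := exists_squarefree_part_not_dvd hno hm (2 ^ n)
    have hk1 : 1 < k := (one_le_pow₀ one_le_two).trans_lt hkn
    have hD0 : D < 0 := neg_of_one_sub_two_mul_eq (by positivity) h
    exact ⟨D, ⟨hD0, hD, ⟨k, s, hk, hk1, hs, h⟩, dvd_quadClassNumber hno hk hkn hD h⟩, hDm⟩
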